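/- Fix v > 0 and ω̄ > 0. For the Dubins car system with state (p_x, p_y, θ) ∈ ℝ³, admissible controls being measurable functions ω : ℝ → [−ω̄, ω̄], and dynamics p_x' = v·cos θ, p_y' = v·sin θ, θ' = ω, define for an initial state z₀ ∈ ℝ³ and time t ≥ 0 the forward reachable set F(z₀, t) = {z : there exist an admissible control ω and a differentiable trajectory x : ℝ → ℝ³ satisfying the dynamics with x(0) = z₀ and x(t) = z}. Then for every θ₀ ∈ ℝ and t ≥ 0: F((0, 0, θ₀), t) = {(cos(θ₀)·a − sin(θ₀)·b, sin(θ₀)·a + cos(θ₀)·b, θ + θ₀) : (a, b, θ) ∈ F((0, 0, 0), t)}. -/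

import Mathlib

/-- The forward reachable set of the Dubins car with speed `v` and turn-rate bound `ωmax`:
states reachable at time `t` from initial state `z₀` by some measurable control
`ω : ℝ → [-ωmax, ωmax]` along a trajectory of the dynamics
`p_x' = v cos θ, p_y' = v sin θ, θ' = ω`. -/
def DubinsFRS (v ωmax : ℝ) (z₀ : ℝ × ℝ × ℝ) (t : ℝ) : Set (ℝ × ℝ × ℝ) :=
  {z | ∃ (ω : ℝ → ℝ) (px py θ : ℝ → ℝ),
        Measurable ω ∧ (∀ s, ω s ∈ Set.Icc (-ωmax) ωmax) ∧
        (∀ s, HasDerivAt px (v * Real.cos (θ s)) s) ∧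
        (∀ s, HasDerivAt py (v * Real.sin (θ s)) s) ∧
        (∀ s, HasDerivAt θ (ω s) s) ∧
        (px 0, py 0, θ 0) = z₀ ∧ (px t, py t, θ t) = z}

/-!
If `(px, py, θ)` is driven by the control `ω`, then rotating its path by `α` and adding `α` to
its heading gives a trajectory driven by the same `ω`: the velocity `v (cos θ, sin θ)`, rotated
by `α`, is `v (cos (θ + α), sin (θ + α))`. So a rotation maps reachable sets into reachable sets,
and the inverse rotation gives the reverse inclusion.
-/

/-- The rotation by `α` about the origin of the plane, acting on poses `(a, b, θ)`: it rotates the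
position `(a, b)` and adds `α` to the heading `θ`, a real number not reduced modulo `2π`. It is the
symmetry under which Dubins reachable sets are equivariant. -/
noncomputable def rotatePose (α : ℝ) (z : ℝ × ℝ × ℝ) : ℝ × ℝ × ℝ :=
  (Real.cos α * z.1 - Real.sin α * z.2.1, Real.sin α * z.1 + Real.cos α * z.2.1, z.2.2 + α)

theorem rotatePose_zero (z : ℝ × ℝ × ℝ) : rotatePose 0 z = z := by
  simp [rotatePose]

theorem rotatePose_add (α β : ℝ) (z : ℝ × ℝ × ℝ) :
    rotatePose (α + β) z = rotatePose α (rotatePose β z) := by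
  simp only [rotatePose, Real.cos_add, Real.sin_add, Prod.mk.injEq]
  refine ⟨?_, ?_, ?_⟩ <;> ring

theorem rotatePose_neg_rotatePose (α : ℝ) (z : ℝ × ℝ × ℝ) :
    rotatePose (-α) (rotatePose α z) = z := by
  rw [← rotatePose_add, neg_add_cancel, rotatePose_zero]

theorem rotatePose_rotatePose_neg (α : ℝ) (z : ℝ × ℝ × ℝ) :
    rotatePose α (rotatePose (-α) z) = z := by
  rw [← rotatePose_add, add_neg_cancel, rotatePose_zero]

section Velocity

variable {px py : ℝ → ℝ} {v φ s : ℝ}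

theorem hasDerivAt_cos_mul_sub_sin_mul (hx : HasDerivAt px (v * Real.cos φ) s)
    (hy : HasDerivAt py (v * Real.sin φ) s) (α : ℝ) :
    HasDerivAt (fun r => Real.cos α * px r - Real.sin α * py r) (v * Real.cos (φ + α)) s := by
  refine ((hx.const_mul (Real.cos α)).sub (hy.const_mul (Real.sin α))).congr_deriv ?_
  rw [Real.cos_add]
  ring

theorem hasDerivAt_sin_mul_add_cos_mul (hx : HasDerivAt px (v * Real.cos φ) s)
    (hy : HasDerivAt py (v * Real.sin φ) s) (α : ℝ) :
    HasDerivAt (fun r => Real.sin α * px r + Real.cos α * py r) (v * Real.sin (φ + α)) s := by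
  refine ((hx.const_mul (Real.sin α)).add (hy.const_mul (Real.cos α))).congr_deriv ?_
  rw [Real.sin_add]
  ring

end Velocity

theorem rotatePose_mem_dubinsFRS {v ωmax t : ℝ} {z₀ z : ℝ × ℝ × ℝ}
    (hz : z ∈ DubinsFRS v ωmax z₀ t) (α : ℝ) :
    rotatePose α z ∈ DubinsFRS v ωmax (rotatePose α z₀) t := by
  obtain ⟨ω, px, py, θ, hω_meas, hω_mem, hpx, hpy, hθ, rfl, rfl⟩ := hz
  exact ⟨ω, fun s => Real.cos α * px s - Real.sin α * py s,
    fun s => Real.sin α * px s + Real.cos α * py s, fun s => θ s + α, hω_meas, hω_mem,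
    fun s => hasDerivAt_cos_mul_sub_sin_mul (hpx s) (hpy s) α,
    fun s => hasDerivAt_sin_mul_add_cos_mul (hpx s) (hpy s) α,
    fun s => (hθ s).add_const α, rfl, rfl⟩

theorem dubinsFRS_rotation_general (v ωmax α t : ℝ) (z₀ : ℝ × ℝ × ℝ) :
    DubinsFRS v ωmax (rotatePose α z₀) t = rotatePose α '' DubinsFRS v ωmax z₀ t := by
  apply Set.Subset.antisymm
  · intro z hz
    have h_back : rotatePose (-α) z ∈ DubinsFRS v ωmax z₀ t := by
      simpa only [rotatePose_neg_rotatePose] using rotatePose_mem_dubinsFRS hz (-α)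
    exact ⟨rotatePose (-α) z, h_back, rotatePose_rotatePose_neg α z⟩
  · rintro _ ⟨z, hz, rfl⟩
    exact rotatePose_mem_dubinsFRS hz α

/-- Rotation equivariance of the Dubins car forward reachable set: the FRS from the
origin with heading `θ₀` is the image of the FRS from the origin with heading `0`
under a rotation of the position by angle `θ₀` and a shift of the heading by `θ₀`. -/
theorem dubinsFRS_rotation
    (v ωmax : ℝ) (hv : 0 < v) (hωmax : 0 < ωmax)
    (θ₀ : ℝ) (t : ℝ) (ht : 0 ≤ t) :
    DubinsFRS v ωmax (0, 0, θ₀) t =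
      {z | ∃ a b θ : ℝ, (a, b, θ) ∈ DubinsFRS v ωmax (0, 0, 0) t ∧
        z = (Real.cos θ₀ * a - Real.sin θ₀ * b,
             Real.sin θ₀ * a + Real.cos θ₀ * b,
             θ + θ₀)} := by
  simpa [rotatePose, Set.image, eq_comm] using dubinsFRS_rotation_general v ωmax θ₀ t (0, 0, 0)
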